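/- Let a, b, c, y be positive real numbers and suppose that y ≤ a + b·log(c + y). Then y ≤ 2b·log b + 2a + c. -/

import Mathlib

/-! Bound the concave function `x ↦ b * log x` by its tangent line of slope `1 / 2`, the one at
`x = 2 * b`. At `x = c + y` its linear term is `(c + y) / 2`, whose `y / 2` is absorbed into the
left-hand side; its constant term is at most `b * log b` because `log 2 ≤ 1`. -/

lemma log_le_log_add_div_sub_one {t x : ℝ} (ht : 0 < t) (hx : 0 < x) :
    Real.log x ≤ Real.log t + (x / t - 1) := by
  have h := Real.log_le_sub_one_of_pos (div_pos hx ht)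
  rwa [Real.log_div hx.ne' ht.ne', sub_le_iff_le_add'] at h

lemma mul_log_le_div_two_add_mul_log {b x : ℝ} (hb : 0 < b) (hx : 0 < x) :
    b * Real.log x ≤ x / 2 + b * Real.log b := by
  have log_two_mul_le : Real.log (2 * b) ≤ 1 + Real.log b := by
    rw [Real.log_mul two_ne_zero hb.ne']
    linarith [Real.log_le_sub_one_of_pos two_pos]
  calc
    b * Real.log x ≤ b * (Real.log (2 * b) + (x / (2 * b) - 1)) := by
      gcongr
      exact log_le_log_add_div_sub_one (mul_pos two_pos hb) hx
    _ ≤ b * (1 + Real.log b + (x / (2 * b) - 1)) := by gcongr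
    _ = x / 2 + b * Real.log b := by
      field_simp
      ring

theorem le_of_le_add_mul_log_general {a b c y : ℝ} (hb : 0 < b) (hcy : 0 < c + y)
    (h : y ≤ a + b * Real.log (c + y)) :
    y ≤ 2 * b * Real.log b + 2 * a + c := by
  linarith [mul_log_le_div_two_add_mul_log hb hcy]

/-- If `a, b, c, y` are positive reals with `y ≤ a + b·log(c + y)`,
then `y ≤ 2b·log b + 2a + c`. -/
theorem le_of_le_add_mul_log {a b c y : ℝ} (ha : 0 < a) (hb : 0 < b) (hc : 0 < c)
    (hy : 0 < y) (h : y ≤ a + b * Real.log (c + y)) :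
    y ≤ 2 * b * Real.log b + 2 * a + c := by
  exact le_of_le_add_mul_log_general hb (add_pos hc hy) h
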